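/- For real numbers a \notin \{0, -1\} and N, define the normalized Krawtchouk polynomials k_n^{a,N}(x) = \frac{1}{n!} \cdot \frac{(-1)^n a^n}{(1+a)^n} \sum_{j=0}^n (-1)^j \frac{(1+a)^j}{a^j} (N-n)_{n-j} \binom{n}{j} \binom{x}{j} j!. Then for all natural numbers n, m, every real N and every real x: \det\big( k^{a, N+n+m}_{m+j-1}(x+i-1) \big)_{i,j=1}^n = (-1)^{nm} \det\big( k^{a, -N}_{n+j-1}(-x+i-1) \big)_{i,j=1}^m, where the determinant of a 0\times 0 matrix equals 1. -/

import Mathlib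

/-- The generalized binomial coefficient `x choose j = x(x-1)⋯(x-j+1)/j!`. -/
noncomputable def gbinom (x : ℝ) (j : ℕ) : ℝ :=
  (∏ k ∈ Finset.range j, (x - k)) / j.factorial

/-- The Pochhammer symbol `(y)_l = y (y+1) ⋯ (y+l-1)`. -/
noncomputable def poch (y : ℝ) (l : ℕ) : ℝ := ∏ k ∈ Finset.range l, (y + k)

/-- The normalized Krawtchouk polynomial
`k_n^{a,N}(x) = (1/n!) ((-1)^n a^n/(1+a)^n)
  ∑_{j=0}^n (-1)^j ((1+a)^j/a^j) (N-n)_{n-j} C(n,j) C(x,j) j!`. -/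
noncomputable def krawtchouk (a N : ℝ) (n : ℕ) (x : ℝ) : ℝ :=
  (1 / n.factorial) * ((-1 : ℝ) ^ n * a ^ n / (1 + a) ^ n) *
    ∑ j ∈ Finset.range (n + 1),
      (-1 : ℝ) ^ j * ((1 + a) ^ j / a ^ j) * poch (N - n) (n - j) *
        (n.choose j : ℝ) * gbinom x j * j.factorial

/-!
Put `c = -a / (1 + a)`. Then `k_n^{a,N}(x)` is the coefficient of `t ^ n` in
`(1 + c t) ^ (N - 1 - x) * (1 + (c + 1) t) ^ x`, by the Chu-Vandermonde identity. With
`F = (1 + c t) ^ (N + m - x) * (1 + (c + 1) t) ^ x`, row `i` of the left Casorati matrix consists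
of coefficients of `(1 + c t) ^ (n - 1 - i) * (1 + (c + 1) t) ^ i * F`. The pair
`(1 + c t, 1 + (c + 1) t)` arises from `(1, t)` by two shears, which act unimodularly on binary
forms of degree `n - 1`, so the row factors may be replaced by `t ^ i` and the determinant is the
Toeplitz minor `det (F_{m + j - i})`. In the same way the right side is a Toeplitz minor of `F⁻¹`,
and the two are complementary minors of mutually inverse triangular Toeplitz matrices; Jacobi's
theorem on complementary minors relates them, the sign being that of a rotation of `n + m` points
by `m`.
-/

section ComplementaryMinors

open Matrix

variable {R : Type*} [CommRing R]

theorem det_toBlocks₁₁_of_mul_eq_one {l m : Type*} [Fintype l] [DecidableEq l] [Fintype m]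
    [DecidableEq m] {A B : Matrix (l ⊕ m) (l ⊕ m) R} (hAB : A * B = 1) :
    A.toBlocks₁₁.det = A.det * B.toBlocks₂₂.det := by
  have hblocks := hAB
  rw [← fromBlocks_toBlocks A, ← fromBlocks_toBlocks B, fromBlocks_multiply, ← fromBlocks_one,
    fromBlocks_inj] at hblocks
  obtain ⟨-, h₁₂, -, h₂₂⟩ := hblocks
  have hmul : A * fromBlocks 1 B.toBlocks₁₂ 0 B.toBlocks₂₂ =
      fromBlocks A.toBlocks₁₁ 0 A.toBlocks₂₁ 1 := by
    conv_lhs => rw [← fromBlocks_toBlocks A]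
    rw [fromBlocks_multiply, h₁₂, h₂₂]
    simp
  simpa using (congrArg det hmul).symm

/-- **Jacobi's complementary minor theorem**, the rows and columns of the minor being selected by
two splittings `e₁`, `e₂` of the index type. -/
theorem det_submatrix_inl_of_mul_eq_one {ι l m : Type*} [Fintype ι] [DecidableEq ι] [Fintype l]
    [DecidableEq l] [Fintype m] [DecidableEq m] {A B : Matrix ι ι R} (hAB : A * B = 1)
    (e₁ e₂ : l ⊕ m ≃ ι) :
    (A.submatrix (e₁ ∘ Sum.inl) (e₂ ∘ Sum.inl)).det =
      Equiv.Perm.sign (e₁.symm.trans e₂) * A.det *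
        (B.submatrix (e₂ ∘ Sum.inr) (e₁ ∘ Sum.inr)).det := by
  have hmul : A.submatrix e₁ e₂ * B.submatrix e₂ e₁ = 1 := by
    rw [submatrix_mul_equiv, hAB, submatrix_one_equiv]
  have hdet : (A.submatrix e₁ e₂).det = Equiv.Perm.sign (e₁.symm.trans e₂) * A.det := by
    rw [← det_permute', ← det_submatrix_equiv_self e₁, submatrix_submatrix]
    congr 2
    ext i
    simp
  rw [← hdet]
  exact det_toBlocks₁₁_of_mul_eq_one hmul

end ComplementaryMinors

section Rotation

theorem val_finRotate_pow {n : ℕ} (m : ℕ) (i : Fin n) :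
    ((finRotate n ^ m) i : ℕ) = (i + m) % n := by
  have := i.neZero
  induction m with
  | zero => simp [Nat.mod_eq_of_lt i.2]
  | succ m ih => simp [pow_succ', finRotate_apply, Fin.val_add, ih, Nat.add_assoc]

theorem sign_finRotate_add_pow (n m : ℕ) :
    Equiv.Perm.sign (finRotate (n + m) ^ m) = (-1) ^ (n * m) := by
  rw [map_pow, sign_finRotate, ← pow_mul]
  cases m with
  | zero => simp
  | succ m =>
    rw [Nat.add_succ_sub_one, add_mul, pow_add, (Nat.even_mul_succ_self m).neg_one_pow, mul_one]

end Rotation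

section Toeplitz

open Matrix PowerSeries

section Semiring

variable {R : Type*} [Semiring R]

/-- The `n × n` Toeplitz matrix `(f_{s + j - i})` of the coefficients of a power series `f`, where
coefficients of negative index are `0`; multiplying by `X ^ i` avoids the truncated subtraction. -/
noncomputable def toeplitz (f : R⟦X⟧) (s n : ℕ) : Matrix (Fin n) (Fin n) R :=
  of fun i j => coeff (s + (j : ℕ)) (X ^ (i : ℕ) * f)

theorem coeff_mul_eq_sum_fin (f g : R⟦X⟧) {k n : ℕ} (hk : k < n) :
    coeff k (f * g) = ∑ l : Fin n, coeff (l : ℕ) f * coeff k (X ^ (l : ℕ) * g) := by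
  rw [coeff_mul, Finset.Nat.sum_antidiagonal_eq_sum_range_succ_mk,
    Fin.sum_univ_eq_sum_range fun l => coeff l f * coeff k (X ^ l * g)]
  refine Finset.sum_subset_zero_on_sdiff (Finset.range_mono hk) ?_ ?_ <;> intro l hl
  · simp only [Finset.mem_sdiff, Finset.mem_range] at hl
    rw [coeff_X_pow_mul', if_neg (by lia), mul_zero]
  · rw [coeff_X_pow_mul', if_pos (Finset.mem_range_succ_iff.mp hl)]

theorem toeplitz_zero_mul_toeplitz_zero (f g : R⟦X⟧) (n : ℕ) :
    toeplitz f 0 n * toeplitz g 0 n = toeplitz (f * g) 0 n := by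
  ext i j
  simp only [toeplitz, mul_apply, of_apply, zero_add]
  rw [← mul_assoc, coeff_mul_eq_sum_fin _ _ j.2]

theorem toeplitz_one_zero (n : ℕ) : toeplitz (1 : R⟦X⟧) 0 n = 1 := by
  ext i j
  simp [toeplitz, coeff_X_pow, one_apply, Fin.ext_iff, eq_comm]

end Semiring

variable {R : Type*} [CommRing R]

theorem det_toeplitz_zero (f : R⟦X⟧) (n : ℕ) :
    (toeplitz f 0 n).det = constantCoeff f ^ n := by
  have htri : (toeplitz f 0 n).IsUpperTriangular := fun i j hji => by
    have hij : ¬ i ≤ j := not_le.mpr hji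
    simp [toeplitz, coeff_X_pow_mul', hij]
  rw [det_of_isUpperTriangular htri]
  simp [toeplitz, coeff_X_pow_mul']

theorem det_toeplitz_of_mul_eq_one {f g : R⟦X⟧} (hfg : f * g = 1) (n m : ℕ) :
    (toeplitz f m n).det =
      (-1) ^ (n * m) * constantCoeff f ^ (n + m) * (toeplitz g n m).det := by
  have hinv : toeplitz f 0 (n + m) * toeplitz g 0 (n + m) = 1 := by
    rw [toeplitz_zero_mul_toeplitz_zero, hfg, toeplitz_one_zero]
  let rotation : Equiv.Perm (Fin (n + m)) := finRotate (n + m) ^ m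
  have hinl (i : Fin n) : (rotation (Fin.castAdd m i) : ℕ) = m + i := by
    rw [val_finRotate_pow, Fin.val_castAdd, Nat.mod_eq_of_lt (by lia), add_comm]
  have hinr (i : Fin m) : (rotation (Fin.natAdd n i) : ℕ) = i := by
    rw [val_finRotate_pow, Fin.val_natAdd, show n + (i : ℕ) + m = i + (n + m) by lia,
      Nat.add_mod_right, Nat.mod_eq_of_lt (by lia)]
  have hsign : Equiv.Perm.sign (finSumFinEquiv.symm.trans (finSumFinEquiv.trans rotation)) =
      (-1) ^ (n * m) := by
    rw [← Equiv.trans_assoc, Equiv.symm_trans_self, Equiv.refl_trans, sign_finRotate_add_pow]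
  have hminor := det_submatrix_inl_of_mul_eq_one hinv finSumFinEquiv
    (finSumFinEquiv.trans rotation)
  rw [hsign, det_toeplitz_zero] at hminor
  convert hminor using 2
  · ext i j
    simp [toeplitz, hinl]
  · simp
  · congr 1
    ext i j
    simp [toeplitz, hinr]

end Toeplitz

section BinaryForms

open Matrix

variable {R S : Type*} [CommRing R] [CommRing S] [Algebra R S]

theorem det_apply_pow_mul_add_smul_pow {n : ℕ} (φ : Fin n → S →ₗ[R] R) (c : R) (u v : S) :
    (of fun i j : Fin n => φ j (u ^ (n - 1 - (i : ℕ)) * (v + c • u) ^ (i : ℕ))).det =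
      (of fun i j : Fin n => φ j (u ^ (n - 1 - (i : ℕ)) * v ^ (i : ℕ))).det := by
  let shear : Matrix (Fin n) (Fin n) R :=
    of fun i l => ((i : ℕ).choose l : R) * c ^ ((i : ℕ) - (l : ℕ))
  have hshear : shear.det = 1 := by
    have htri : shear.IsLowerTriangular := fun i l hil => by
      have hlt : (i : ℕ) < l := hil
      simp [shear, Nat.choose_eq_zero_of_lt hlt]
    simp [det_of_isLowerTriangular _ htri, shear]
  have hexpand (i : Fin n) : u ^ (n - 1 - (i : ℕ)) * (v + c • u) ^ (i : ℕ) =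
      ∑ l : Fin n, shear i l • (u ^ (n - 1 - (l : ℕ)) * v ^ (l : ℕ)) := by
    simp only [shear, of_apply]
    rw [Fin.sum_univ_eq_sum_range fun l => (((i : ℕ).choose l : R) * c ^ ((i : ℕ) - l)) •
      (u ^ (n - 1 - l) * v ^ l), add_pow, Finset.mul_sum]
    refine Finset.sum_subset_zero_on_sdiff (Finset.range_mono i.2) ?_ ?_ <;> intro l hl
    · simp only [Finset.mem_sdiff, Finset.mem_range] at hl
      simp [Nat.choose_eq_zero_of_lt (show (i : ℕ) < l by lia)]
    · have hli : l ≤ i := Finset.mem_range_succ_iff.mp hl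
      rw [show n - 1 - l = (n - 1 - i) + (i - l) by lia, pow_add, smul_pow, Algebra.smul_def,
        Algebra.smul_def, map_mul, map_natCast]
      ring
  rw [← one_mul (det (of fun i j : Fin n => φ j (u ^ (n - 1 - (i : ℕ)) * v ^ (i : ℕ)))),
    ← hshear, ← det_mul]
  congr 1
  ext i j
  simp [hexpand, mul_apply]

theorem det_apply_add_smul_pow_mul_pow {n : ℕ} (φ : Fin n → S →ₗ[R] R) (c : R) (u v : S) :
    (of fun i j : Fin n => φ j ((u + c • v) ^ (n - 1 - (i : ℕ)) * v ^ (i : ℕ))).det =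
      (of fun i j : Fin n => φ j (u ^ (n - 1 - (i : ℕ)) * v ^ (i : ℕ))).det := by
  have hreverse (w : S) :
      (of fun i j : Fin n => φ j (w ^ (n - 1 - (i : ℕ)) * v ^ (i : ℕ))).det =
        Equiv.Perm.sign (Fin.revPerm (n := n)) *
          (of fun i j : Fin n => φ j (v ^ (n - 1 - (i : ℕ)) * w ^ (i : ℕ))).det := by
    rw [← det_permute]
    congr 1
    ext i j
    simp only [of_apply, submatrix_apply, Fin.revPerm_apply, Fin.val_rev, id]
    rw [mul_comm, show n - 1 - (n - ((i : ℕ) + 1)) = i by lia,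
      show n - ((i : ℕ) + 1) = n - 1 - i by lia]
  rw [hreverse, hreverse, det_apply_pow_mul_add_smul_pow]

open PowerSeries in
theorem det_coeff_one_add_smul_X_pow_mul (c : R) (f : R⟦X⟧) (s n : ℕ) :
    (of fun i j : Fin n => coeff (s + (j : ℕ))
      ((1 + c • X) ^ (n - 1 - (i : ℕ)) * (1 + (c + 1) • X) ^ (i : ℕ) * f)).det =
      (toeplitz f s n).det := by
  let φ (j : Fin n) : R⟦X⟧ →ₗ[R] R := coeff (s + (j : ℕ)) ∘ₗ LinearMap.mulRight R f
  have hv : 1 + (c + 1) • X = X + (1 : R) • (1 + c • X : R⟦X⟧) := by module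
  calc
    _ = (of fun i j : Fin n => φ j ((1 + c • X) ^ (n - 1 - (i : ℕ)) *
          (X + (1 : R) • (1 + c • X)) ^ (i : ℕ))).det := by rw [← hv]; rfl
    _ = (of fun i j : Fin n => φ j (1 ^ (n - 1 - (i : ℕ)) * X ^ (i : ℕ))).det := by
      rw [det_apply_pow_mul_add_smul_pow, det_apply_add_smul_pow_mul_pow]
    _ = _ := by simp [φ, toeplitz]

end BinaryForms

section BinomialSeries

open PowerSeries

variable {R : Type*} [CommRing R] [BinomialRing R]

/-- The binomial power series `(1 + c X) ^ r` with exponent `r` in a binomial ring. -/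
noncomputable def rescaledBinomialSeries (c r : R) : R⟦X⟧ :=
  rescale c (binomialSeries R r)

theorem coeff_rescaledBinomialSeries (c r : R) (n : ℕ) :
    coeff n (rescaledBinomialSeries c r) = c ^ n * Ring.choose r n := by
  simp [rescaledBinomialSeries, coeff_rescale]

theorem constantCoeff_rescaledBinomialSeries (c r : R) :
    constantCoeff (rescaledBinomialSeries c r) = 1 := by
  simp [← coeff_zero_eq_constantCoeff_apply, coeff_rescaledBinomialSeries]

theorem rescaledBinomialSeries_add (c r s : R) :
    rescaledBinomialSeries c (r + s) =
      rescaledBinomialSeries c r * rescaledBinomialSeries c s := by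
  simp [rescaledBinomialSeries]

theorem rescaledBinomialSeries_zero (c : R) : rescaledBinomialSeries c 0 = 1 := by
  simp [rescaledBinomialSeries]

theorem rescaledBinomialSeries_natCast (c : R) (k : ℕ) :
    rescaledBinomialSeries c (k : R) = (1 + c • X) ^ k := by
  simp [rescaledBinomialSeries, rescale_X, smul_eq_C_mul]

/-- The binomial expansion of `(1 + d X) ^ x = ((1 + c X) + (d - c) X) ^ x`, truncated at
degree `n`. -/
theorem coeff_rescaledBinomialSeries_eq_sum (c d x : R) {l n : ℕ} (hl : l ≤ n) :
    coeff l (rescaledBinomialSeries d x) =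
      coeff l (∑ j ∈ Finset.range (n + 1),
        (Ring.choose x j * (d - c) ^ j) • (X ^ j * rescaledBinomialSeries c (x - j))) := by
  simp only [map_sum, coeff_smul, coeff_X_pow_mul', coeff_rescaledBinomialSeries]
  calc
    d ^ l * Ring.choose x l = ((d - c) + c) ^ l * Ring.choose x l := by rw [sub_add_cancel]
    _ = ∑ j ∈ Finset.range (l + 1),
          (d - c) ^ j * c ^ (l - j) * (l.choose j • Ring.choose x l) := by
      simp only [add_pow, Finset.sum_mul, nsmul_eq_mul, mul_assoc]
    _ = _ := by
      refine Finset.sum_subset_zero_on_sdiff (Finset.range_mono (by lia)) ?_ ?_ <;> intro j hj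
      · simp only [Finset.mem_sdiff, Finset.mem_range] at hj
        rw [if_neg (by lia), smul_zero]
      · have hjl : j ≤ l := Finset.mem_range_succ_iff.mp hj
        rw [if_pos hjl, Ring.choose_smul_choose x hjl, smul_eq_mul]
        ring

theorem coeff_rescaledBinomialSeries_mul (c d M x : R) (n : ℕ) :
    coeff n (rescaledBinomialSeries c (M - x) * rescaledBinomialSeries d x) =
      ∑ j ∈ Finset.range (n + 1), Ring.choose x j * (d - c) ^ j *
        (c ^ (n - j) * Ring.choose (M - j) (n - j)) := by
  have htrunc : coeff n (rescaledBinomialSeries c (M - x) * rescaledBinomialSeries d x) =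
      coeff n (rescaledBinomialSeries c (M - x) * ∑ j ∈ Finset.range (n + 1),
        (Ring.choose x j * (d - c) ^ j) • (X ^ j * rescaledBinomialSeries c (x - j))) := by
    simp only [coeff_mul]
    refine Finset.sum_congr rfl fun p hp => ?_
    rw [coeff_rescaledBinomialSeries_eq_sum c d x
      (Finset.HasAntidiagonal.antidiagonal.snd_le hp)]
  rw [htrunc, Finset.mul_sum, map_sum]
  refine Finset.sum_congr rfl fun j hj => ?_
  rw [mul_smul_comm, mul_left_comm, ← rescaledBinomialSeries_add, sub_add_sub_cancel, coeff_smul,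
    coeff_X_pow_mul', if_pos (Finset.mem_range_succ_iff.mp hj), coeff_rescaledBinomialSeries,
    smul_eq_mul]

end BinomialSeries

section KrawtchoukSeries

open PowerSeries

variable {R : Type*} [CommRing R] [BinomialRing R]

/-- The generating function `(1 + c X) ^ (M - x) * (1 + (c + 1) X) ^ x` of the Krawtchouk
polynomials at `x`; the polynomials `k_n^{a,N}` correspond to `c = -a / (1 + a)` and `M = N - 1`. -/
noncomputable def krawtchoukSeries (c M x : R) : R⟦X⟧ :=
  rescaledBinomialSeries c (M - x) * rescaledBinomialSeries (c + 1) x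

theorem constantCoeff_krawtchoukSeries (c M x : R) :
    constantCoeff (krawtchoukSeries c M x) = 1 := by
  simp [krawtchoukSeries, constantCoeff_rescaledBinomialSeries]

theorem krawtchoukSeries_mul_neg (c M x : R) :
    krawtchoukSeries c M x * krawtchoukSeries c (-M) (-x) = 1 := by
  rw [krawtchoukSeries, krawtchoukSeries, mul_mul_mul_comm, ← rescaledBinomialSeries_add,
    ← rescaledBinomialSeries_add, show M - x + (-M - -x) = 0 by ring, add_neg_cancel,
    rescaledBinomialSeries_zero, rescaledBinomialSeries_zero, mul_one]

theorem krawtchoukSeries_add_natCast (c M x : R) (k i : ℕ) :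
    krawtchoukSeries c (M + k + i) (x + i) =
      (1 + c • X) ^ k * (1 + (c + 1) • X) ^ i * krawtchoukSeries c M x := by
  rw [krawtchoukSeries, krawtchoukSeries, show M + k + i - (x + i) = k + (M - x) by ring,
    add_comm x, rescaledBinomialSeries_add, rescaledBinomialSeries_add,
    rescaledBinomialSeries_natCast, rescaledBinomialSeries_natCast, mul_mul_mul_comm]

theorem det_coeff_krawtchoukSeries_eq_det_toeplitz (c M x : R) (s n : ℕ) :
    (Matrix.of fun i j : Fin n =>
      coeff (s + (j : ℕ)) (krawtchoukSeries c (M + n - 1) (x + (i : ℕ)))).det =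
      (toeplitz (krawtchoukSeries c M x) s n).det := by
  rw [← det_coeff_one_add_smul_X_pow_mul c]
  congr 1
  ext i j
  have hn : (n : R) = (n - 1 - i : ℕ) + (i : ℕ) + 1 := by
    exact_mod_cast congrArg (Nat.cast (R := R)) (show n = n - 1 - i + i + 1 by lia)
  rw [Matrix.of_apply, Matrix.of_apply, ← krawtchoukSeries_add_natCast, hn]
  congr 2
  ring

end KrawtchoukSeries

section Krawtchouk

theorem gbinom_eq_choose (x : ℝ) (j : ℕ) : gbinom x j = Ring.choose x j := by
  rw [gbinom, Ring.choose_eq_smul, ← Polynomial.aeval_eq_smeval, Polynomial.aeval_def,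
    Polynomial.eval₂_eq_eval_map, descPochhammer_map, descPochhammer_eval_eq_prod_range,
    smul_eq_mul, div_eq_inv_mul]

theorem eval_ascPochhammer_eq_prod_range {S : Type*} [CommSemiring S] (y : S) (l : ℕ) :
    (ascPochhammer S l).eval y = ∏ k ∈ Finset.range l, (y + k) := by
  induction l with
  | zero => simp
  | succ l ih => rw [Finset.prod_range_succ, ascPochhammer_succ_eval, ih]

theorem poch_eq_factorial_mul_choose (y : ℝ) (l : ℕ) :
    poch y l = l.factorial * Ring.choose (y + l - 1) l := by
  rw [← Ring.multichoose_eq, ← nsmul_eq_mul, Ring.factorial_nsmul_multichoose_eq_ascPochhammer,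
    Polynomial.ascPochhammer_smeval_eq_eval, eval_ascPochhammer_eq_prod_range, poch]

theorem krawtchouk_eq_coeff_krawtchoukSeries {a : ℝ} (ha0 : a ≠ 0) (ha1 : a ≠ -1) (N x : ℝ)
    (n : ℕ) :
    krawtchouk a N n x =
      PowerSeries.coeff n (krawtchoukSeries (-a / (1 + a)) (N - 1) x) := by
  have ha : 1 + a ≠ 0 := fun h => ha1 (by linarith)
  rw [krawtchoukSeries, coeff_rescaledBinomialSeries_mul, krawtchouk, Finset.mul_sum]
  refine Finset.sum_congr rfl fun j hj => ?_
  obtain ⟨k, rfl⟩ := Nat.exists_eq_add_of_le (Finset.mem_range_succ_iff.mp hj)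
  have hfactorial : ((j + k).choose j : ℝ) * j.factorial * k.factorial = (j + k).factorial := by
    rw [Nat.choose_symm_add]
    exact_mod_cast Nat.add_choose_mul_factorial_mul_factorial j k
  have hpow : (-1 : ℝ) ^ (j + k) * a ^ (j + k) / (1 + a) ^ (j + k) *
      ((-1) ^ j * ((1 + a) ^ j / a ^ j)) = (-a / (1 + a)) ^ k := by
    rw [← mul_pow, ← div_pow, ← div_pow, ← mul_pow, pow_add, mul_right_comm, ← mul_pow,
      show -1 * a / (1 + a) * (-1 * ((1 + a) / a)) = 1 by field_simp, one_pow, one_mul,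
      neg_one_mul]
  rw [Nat.add_sub_cancel_left, poch_eq_factorial_mul_choose, gbinom_eq_choose, ← hpow,
    show N - ((j + k : ℕ) : ℝ) + k - 1 = N - 1 - j by push_cast; ring, add_sub_cancel_left,
    one_pow, mul_one]
  have hne : ((j + k).factorial : ℝ) ≠ 0 := by positivity
  rw [one_div, mul_assoc, inv_mul_eq_iff_eq_mul₀ hne, ← hfactorial]
  ring

end Krawtchouk

/-- the symmetry of Casorati determinants of Krawtchouk
polynomials. -/
theorem krawtchouk_casorati_symmetry (a : ℝ) (ha0 : a ≠ 0) (ha1 : a ≠ -1)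
    (N x : ℝ) (n m : ℕ) :
    Matrix.det (Matrix.of fun i j : Fin n =>
      krawtchouk a (N + n + m) (m + (j : ℕ)) (x + (i : ℕ)))
    = (-1 : ℝ) ^ (n * m) *
      Matrix.det (Matrix.of fun i j : Fin m =>
        krawtchouk a (-N) (n + (j : ℕ)) (-x + (i : ℕ))) := by
  simp only [krawtchouk_eq_coeff_krawtchoukSeries ha0 ha1]
  rw [show N + n + m - 1 = N + m + n - 1 by ring, show -N - 1 = -(N + m) + m - 1 by ring,
    det_coeff_krawtchoukSeries_eq_det_toeplitz, det_coeff_krawtchoukSeries_eq_det_toeplitz,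
    det_toeplitz_of_mul_eq_one (krawtchoukSeries_mul_neg _ _ _),
    constantCoeff_krawtchoukSeries, one_pow, mul_one]
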